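/- Tightness of the LP-dual-based heuristic under total unimodularity (second part of Proposition 1): if the matrix A is totally unimodular and every entry of b is an integer, then the infimum, over all triples (y, λ, μ) with y ∈ Ω, λ : Fin m → ℝ, λ ≥ 0, μ : Fin n → ℝ, μ ≤ 0, and (Aᵀ λ) i + μ i ≤ l i + (u i − l i) * y i for all i, of the quantity Σ_i (l i + (u i − l i) * y i) * y i − Σ_k b k * λ k − Σ_i μ i, equals min_{y∈Ω} R_y, the optimal robustness cost. -/

import Mathlib

open Finset

/-!
For a fixed binary `y`, regret is largest in the scenario `w = l + (u - l) y`, so `R_y` is the cost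
of `y` in `w` minus the optimal binary cost in `w`. Total unimodularity and the integrality of `b`
make every vertex of the polytope `{x ∈ [0, 1]ⁿ | A x ≥ b}` integral: a vertex is determined by a
nonsingular system of tight constraints, whose determinant is `±1`, and Cramer's rule applies.
Hence the optimal binary cost is the value of the linear relaxation, which by duality is the
supremum of `∑ b k λ k + ∑ μ i` over the dual feasible `(λ, μ)`. Here duality is the minimax theorem
for the Lagrangian `c x + λ (b - A x)` on `[0, 1]ⁿ × {λ ≥ 0}`: minimising over the box gives
`b λ + ∑ min (0, (c - Aᵀ λ) i)`, which dictates `μ = min (0, c - Aᵀ λ)`.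
-/

open Filter Topology Matrix

section IntegralVertices

variable {κ ι R 𝕜 : Type*} [Fintype ι]

lemma det_mem_subring_of_forall_mem [DecidableEq ι] [CommRing R] {S : Subring R}
    {B : Matrix ι ι R} (hB : ∀ i j, B i j ∈ S) : B.det ∈ S := by
  simp only [Matrix.det_apply, Units.smul_def]
  exact sum_mem fun σ _ => zsmul_mem (prod_mem fun i _ => hB _ _) _

lemma signTypeCast_mem_subring [Ring R] (S : Subring R) (s : SignType) : (s : R) ∈ S := by
  cases s <;> simp [S.one_mem, S.zero_mem, S.neg_mem]

lemma mem_subring_of_mulVec_mem_of_isTotallyUnimodular [DecidableEq ι] [CommRing R]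
    {S : Subring R} {B : Matrix ι ι R} (hB : B.IsTotallyUnimodular) (hdet : B.det ≠ 0)
    {x : ι → R} (hx : ∀ i, (B *ᵥ x) i ∈ S) (i : ι) : x i ∈ S := by
  have entries_mem : ∀ j k, (B.updateCol i (B *ᵥ x)) j k ∈ S := fun j k => by
    rw [updateCol_apply]
    split_ifs
    · exact hx j
    · obtain ⟨s, hs⟩ := hB.apply j k
      exact hs ▸ signTypeCast_mem_subring S s
  have cramer_rule : (B.updateCol i (B *ᵥ x)).det = B.det * x i := by
    rw [← cramer_apply, cramer_eq_adjugate_mulVec, mulVec_mulVec, adjugate_mul, smul_mulVec,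
      one_mulVec, Pi.smul_apply, smul_eq_mul]
  have det_mul_mem : B.det * x i ∈ S :=
    cramer_rule ▸ det_mem_subring_of_forall_mem entries_mem
  obtain ⟨s, hs⟩ := (isTotallyUnimodular_iff_fintype B).1 hB ι id id
  rw [submatrix_id_id] at hs
  rw [← hs] at det_mul_mem hdet
  cases s <;> simp_all

lemma exists_det_submatrix_ne_zero_of_mulVec_injective [DecidableEq ι] [Field 𝕜] [Finite κ]
    {M : Matrix κ ι 𝕜} (hM : Function.Injective M.mulVec) :
    ∃ f : ι → κ, (M.submatrix f id).det ≠ 0 := by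
  have := Fintype.ofFinite κ
  obtain ⟨τ, a, ha, hspan, hindep⟩ := exists_linearIndependent' 𝕜 M.row
  have := Fintype.ofInjective a ha
  have card_eq : Fintype.card ι = Fintype.card τ := by
    rw [linearIndependent_iff_card_eq_finrank_span.mp hindep, Set.finrank, hspan,
      ← M.rank_eq_finrank_span_row, Matrix.rank, LinearMap.finrank_range_of_inj hM,
      Module.finrank_fintype_fun_eq_card]
  let e : ι ≃ τ := Fintype.equivOfCardEq card_eq
  have rows_indep : LinearIndependent 𝕜 (M.submatrix (a ∘ e) id).row :=
    hindep.comp e e.injective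
  rw [linearIndependent_rows_iff_isUnit, isUnit_iff_isUnit_det] at rows_indep
  exact ⟨a ∘ e, rows_indep.ne_zero⟩

variable [Field 𝕜] [LinearOrder 𝕜] [IsStrictOrderedRing 𝕜]

lemma eventually_le_mulVec_add_smul [TopologicalSpace 𝕜] [OrderTopology 𝕜] [Finite κ]
    {A : Matrix κ ι 𝕜} {b : κ → 𝕜} {x d : ι → 𝕜} (hx : b ≤ A *ᵥ x)
    (hd : ∀ k, (A *ᵥ x) k = b k → (A *ᵥ d) k = 0) :
    ∀ᶠ t : 𝕜 in 𝓝 0, b ≤ A *ᵥ (x + t • d) := by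
  simp only [Pi.le_def, mulVec_add, mulVec_smul, Pi.add_apply, Pi.smul_apply, smul_eq_mul]
  refine eventually_all.2 fun k => ?_
  rcases (hx k).eq_or_lt with tight | slack
  · exact .of_forall fun t => by rw [hd k tight.symm, mul_zero, add_zero]; exact hx k
  · have : Tendsto (fun t : 𝕜 => (A *ᵥ x) k + t * (A *ᵥ d) k) (𝓝 0) (𝓝 ((A *ᵥ x) k)) :=
      Continuous.tendsto' (by fun_prop) _ _ (by simp)
    exact (this.eventually_const_lt slack).mono fun _ => le_of_lt

lemma eq_zero_of_mulVec_eq_zero_of_tight_of_mem_extremePoints [Finite κ]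
    {A : Matrix κ ι 𝕜} {b : κ → 𝕜} {x : ι → 𝕜} (hx : x ∈ {x | b ≤ A *ᵥ x}.extremePoints 𝕜)
    {d : ι → 𝕜} (hd : ∀ k, (A *ᵥ x) k = b k → (A *ᵥ d) k = 0) : d = 0 := by
  let := Preorder.topology 𝕜
  have : OrderTopology 𝕜 := ⟨rfl⟩
  have hforward := eventually_le_mulVec_add_smul hx.1 hd
  have hbackward : ∀ᶠ t : 𝕜 in 𝓝 0, b ≤ A *ᵥ (x + (-t) • d) :=
    (continuous_neg.tendsto' (0 : 𝕜) 0 neg_zero).eventually hforward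
  obtain ⟨t, ⟨hplus, hminus⟩, ht : 0 < t⟩ :=
    (((hforward.and hbackward).filter_mono nhdsWithin_le_nhds).and self_mem_nhdsWithin :
      ∀ᶠ t in 𝓝[>] (0 : 𝕜), _).exists
  have x_mem_openSegment : x ∈ openSegment 𝕜 (x + t • d) (x + (-t) • d) :=
    ⟨1 / 2, 1 / 2, by norm_num, by norm_num, by norm_num, by module⟩
  have : t • d = 0 := by
    simpa using (mem_extremePoints.1 hx).2 _ hplus _ hminus x_mem_openSegment
  exact (smul_eq_zero.1 this).resolve_left ht.ne'

theorem mem_subring_of_mem_extremePoints_of_isTotallyUnimodular [Finite κ]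
    {S : Subring 𝕜} {A : Matrix κ ι 𝕜} (hA : A.IsTotallyUnimodular) {b : κ → 𝕜}
    (hb : ∀ k, b k ∈ S) {x : ι → 𝕜} (hx : x ∈ {x | b ≤ A *ᵥ x}.extremePoints 𝕜) (i : ι) :
    x i ∈ S := by
  classical
  let T := {k // (A *ᵥ x) k = b k}
  let M : Matrix T ι 𝕜 := A.submatrix Subtype.val id
  have hM : Function.Injective M.mulVec := by
    refine (injective_iff_map_eq_zero M.mulVecLin).2 fun d hd => ?_
    exact eq_zero_of_mulVec_eq_zero_of_tight_of_mem_extremePoints hx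
      fun k hk => congrFun hd ⟨k, hk⟩
  obtain ⟨f, hf⟩ := exists_det_submatrix_ne_zero_of_mulVec_injective hM
  refine mem_subring_of_mulVec_mem_of_isTotallyUnimodular
    ((hA.submatrix Subtype.val id).submatrix f id) hf (fun j => ?_) i
  have : (M.submatrix f id *ᵥ x) j = b (f j) := (f j).2
  exact this ▸ hb _

end IntegralVertices

section Relaxation

variable {κ ι : Type*}

lemma isTotallyUnimodular_fromRows_one_neg_one {R : Type*} [CommRing R] [DecidableEq ι]
    {A : Matrix κ ι R} (hA : A.IsTotallyUnimodular) :
    (fromRows A (fromRows (1 : Matrix ι ι R) (-1 : Matrix ι ι R))).IsTotallyUnimodular := by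
  refine hA.fromRows_unitlike ?_
  rintro - (i | i)
  · exact ⟨i, 1, by ext j; simp [one_apply, Pi.single_apply, eq_comm]⟩
  · exact ⟨i, -1, by ext j; by_cases h : i = j <;> simp [one_apply, Pi.single_apply, h, eq_comm]⟩

lemma mem_Icc_of_forall_eq_zero_or_one {y : ι → ℝ} (hy : ∀ i, y i = 0 ∨ y i = 1) :
    y ∈ Set.Icc 0 1 :=
  ⟨fun i => by rcases hy i with h | h <;> simp [h],
    fun i => by rcases hy i with h | h <;> simp [h]⟩

variable [Fintype ι]

/-- The `0`-`1` vectors satisfying `A x ≥ b`. -/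
def binaryPoints (A : Matrix κ ι ℝ) (b : κ → ℝ) : Set (ι → ℝ) :=
  {y | (∀ k, b k ≤ A.mulVec y k) ∧ ∀ i, y i = 0 ∨ y i = 1}

/-- The feasible region of the linear programming relaxation of `binaryPoints A b`. -/
def relaxation (A : Matrix κ ι ℝ) (b : κ → ℝ) : Set (ι → ℝ) :=
  {x ∈ Set.Icc 0 1 | b ≤ A *ᵥ x}

variable {A : Matrix κ ι ℝ} {b : κ → ℝ}

lemma binaryPoints_subset_relaxation : binaryPoints A b ⊆ relaxation A b := fun _ hy =>
  ⟨mem_Icc_of_forall_eq_zero_or_one hy.2, hy.1⟩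

lemma binaryPoints_subset_Icc : binaryPoints A b ⊆ Set.Icc 0 1 :=
  binaryPoints_subset_relaxation.trans fun _ hx => hx.1

lemma isBounded_binaryPoints : Bornology.IsBounded (binaryPoints A b) :=
  (Metric.isBounded_Icc 0 1).subset binaryPoints_subset_Icc

lemma isCompact_relaxation : IsCompact (relaxation A b) :=
  isCompact_Icc.inter_right <|
    isClosed_Ici.preimage (Continuous.matrix_mulVec continuous_const continuous_id)

lemma relaxation_eq_polyhedron [DecidableEq ι] :
    relaxation A b =
      {x | Sum.elim b (Sum.elim 0 (-1)) ≤
        fromRows A (fromRows (1 : Matrix ι ι ℝ) (-1 : Matrix ι ι ℝ)) *ᵥ x} := by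
  ext x
  simp [relaxation, fromRows_mulVec, Pi.le_def, neg_mulVec, and_comm]

lemma extremePoints_relaxation_subset_binaryPoints [Finite κ] (hA : A.IsTotallyUnimodular)
    (hb : ∀ k, ∃ z : ℤ, b k = z) : (relaxation A b).extremePoints ℝ ⊆ binaryPoints A b := by
  classical
  intro x hx
  refine ⟨hx.1.2, fun i => ?_⟩
  have hx_box := hx.1.1
  rw [relaxation_eq_polyhedron] at hx
  have rhs_integral : ∀ k : κ ⊕ ι ⊕ ι,
      Sum.elim b (Sum.elim 0 (-1)) k ∈ (Int.castRingHom ℝ).range := by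
    rintro (k | _ | _)
    · exact (hb k).imp fun _ => Eq.symm
    · exact zero_mem _
    · exact neg_mem (one_mem _)
  obtain ⟨z, hz : (z : ℝ) = x i⟩ := mem_subring_of_mem_extremePoints_of_isTotallyUnimodular
    (isTotallyUnimodular_fromRows_one_neg_one hA) rhs_integral hx i
  have hz_nonneg : (0 : ℝ) ≤ z := hz ▸ hx_box.1 i
  have hz_le_one : (z : ℝ) ≤ 1 := hz ▸ hx_box.2 i
  norm_cast at hz_nonneg hz_le_one
  rw [← hz]
  exact_mod_cast (by lia : z = 0 ∨ z = 1)

lemma exists_mem_extremePoints_isMinOn_of_isCompact {E : Type*} [AddCommGroup E] [Module ℝ E]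
    [TopologicalSpace E] [T2Space E] [IsTopologicalAddGroup E] [ContinuousSMul ℝ E]
    [LocallyConvexSpace ℝ E] {s : Set E} (hs : IsCompact s) (hne : s.Nonempty)
    (f : StrongDual ℝ E) : ∃ y ∈ s.extremePoints ℝ, IsMinOn f s y := by
  have hface : IsExposed ℝ s ((-f).toExposed s) := ContinuousLinearMap.toExposed.isExposed
  obtain ⟨w, hw, hmin⟩ := hs.exists_isMinOn hne f.continuous.continuousOn
  obtain ⟨y, hy⟩ := (hface.isCompact hs).extremePoints_nonempty
    ⟨w, hw, fun z hz => neg_le_neg (hmin hz)⟩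
  exact ⟨y, hface.isExtreme.extremePoints_subset_extremePoints hy,
    fun z hz => neg_le_neg_iff.1 (hy.1.2 z hz)⟩

lemma exists_mem_binaryPoints_dotProduct_le [Finite κ] (hA : A.IsTotallyUnimodular)
    (hb : ∀ k, ∃ z : ℤ, b k = z) (c : ι → ℝ) {x : ι → ℝ} (hx : x ∈ relaxation A b) :
    ∃ y ∈ binaryPoints A b, c ⬝ᵥ y ≤ c ⬝ᵥ x := by
  obtain ⟨y, hy, hmin⟩ := exists_mem_extremePoints_isMinOn_of_isCompact
    isCompact_relaxation ⟨x, hx⟩ (dotProductBilin ℝ ℝ c).toContinuousLinearMap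
  exact ⟨y, extremePoints_relaxation_subset_binaryPoints hA hb hy, hmin hx⟩

end Relaxation

section Duality

theorem exists_forall_lt_of_forall_exists_lt {E F β : Type*} [LinearOrder β] [DenselyOrdered β]
    [AddCommGroup E] [Module ℝ E] [TopologicalSpace E] [IsTopologicalAddGroup E]
    [ContinuousSMul ℝ E] [AddCommGroup F] [Module ℝ F] [TopologicalSpace F]
    [IsTopologicalAddGroup F] [ContinuousSMul ℝ F] {X : Set E} {Y : Set F} {f : E → F → β}
    (hX : IsCompact X) (hX_convex : Convex ℝ X) (hX_ne : X.Nonempty) (hY_convex : Convex ℝ Y)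
    (hf_lsc : ∀ y ∈ Y, LowerSemicontinuousOn (f · y) X)
    (hf_convex : ∀ y ∈ Y, QuasiconvexOn ℝ X (f · y))
    (hf_usc : ∀ x ∈ X, UpperSemicontinuousOn (f x) Y)
    (hf_concave : ∀ x ∈ X, QuasiconcaveOn ℝ Y (f x))
    {t : β} (ht : ∀ x ∈ X, ∃ y ∈ Y, t < f x y) : ∃ y ∈ Y, ∀ x ∈ X, t < f x y := by
  have no_common_sublevel : X ∩ ⋂ y ∈ Y, (f · y) ⁻¹' Set.Iic t = ∅ := by
    refine Set.eq_empty_of_forall_notMem fun x ⟨hx, hx_le⟩ => ?_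
    obtain ⟨y, hy, hlt⟩ := ht x hx
    exact hlt.not_ge (Set.mem_iInter₂.1 hx_le y hy)
  obtain ⟨s, hs⟩ :=
    (LowerSemicontinuousOn.inter_biInter_preimage_Iic_eq_empty_iff_exists_finset hX hf_lsc).1
      no_common_sublevel
  refine Sion.exists_lt_iInf_of_lt_iInf_of_finite hX_ne hX hf_lsc hf_convex hY_convex hf_usc
    hf_concave hX_convex (s.finite_toSet.image Subtype.val) (by simp) fun x hx => ?_
  obtain ⟨y, hy, hlt⟩ := hs x hx
  exact ⟨y, Set.mem_image_of_mem _ hy, hlt⟩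

variable {κ ι : Type*}

lemma exists_mem_Icc_dotProduct_eq_sum_min {R : Type*} [Ring R] [LinearOrder R]
    [IsStrictOrderedRing R] [Fintype ι] (r : ι → R) :
    ∃ x ∈ Set.Icc (0 : ι → R) 1, r ⬝ᵥ x = ∑ i, min 0 (r i) := by
  have pointwise : ∀ i, ∃ z, 0 ≤ z ∧ z ≤ 1 ∧ r i * z = min 0 (r i) := fun i => by
    rcases le_total 0 (r i) with h | h
    · exact ⟨0, le_rfl, zero_le_one, by rw [mul_zero, min_eq_left h]⟩
    · exact ⟨1, zero_le_one, le_rfl, by rw [mul_one, min_eq_right h]⟩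
  choose x hx_nonneg hx_le_one hx using pointwise
  exact ⟨x, ⟨hx_nonneg, hx_le_one⟩, sum_congr rfl fun i _ => hx i⟩

variable [Fintype κ]

lemma convexOn_dotProduct_of_nonneg {E : Type*} [AddCommGroup E] [Module ℝ E] {X : Set E}
    {g : E → κ → ℝ} (hg : ConvexOn ℝ X g) {lam : κ → ℝ} (hlam : 0 ≤ lam) :
    ConvexOn ℝ X fun x => lam ⬝ᵥ g x := by
  refine ⟨hg.1, fun x hx y hy a c ha hc hac => ?_⟩
  calc lam ⬝ᵥ g (a • x + c • y)
      ≤ lam ⬝ᵥ (a • g x + c • g y) :=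
        dotProduct_le_dotProduct_of_nonneg_left (hg.2 hx hy ha hc hac) hlam
    _ = a • (lam ⬝ᵥ g x) + c • (lam ⬝ᵥ g y) := by
        rw [dotProduct_add, dotProduct_smul, dotProduct_smul]

lemma exists_nonneg_lt_add_dotProduct {R : Type*} [Ring R] [LinearOrder R]
    [IsStrictOrderedRing R] [Archimedean R] {v : κ → R} (hv : ¬ v ≤ 0) (s t : R) :
    ∃ lam : κ → R, 0 ≤ lam ∧ t < s + lam ⬝ᵥ v := by
  classical
  obtain ⟨k, hk⟩ : ∃ k, 0 < v k := by simpa [Pi.le_def] using hv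
  obtain ⟨n, hn⟩ := exists_lt_nsmul hk (t - s)
  refine ⟨Pi.single k n, Pi.single_nonneg.2 n.cast_nonneg, ?_⟩
  rw [single_dotProduct, ← nsmul_eq_mul]
  exact sub_lt_iff_lt_add'.1 hn

theorem exists_lagrange_multiplier_of_forall_lt {E : Type*} [AddCommGroup E] [Module ℝ E]
    [TopologicalSpace E] [IsTopologicalAddGroup E] [ContinuousSMul ℝ E] {X : Set E}
    (hX : IsCompact X) {f : E → ℝ} {g : E → κ → ℝ} (hf : ConvexOn ℝ X f)
    (hf_cont : ContinuousOn f X) (hg : ConvexOn ℝ X g) (hg_cont : ContinuousOn g X) {t : ℝ}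
    (ht : ∀ x ∈ X, g x ≤ 0 → t < f x) :
    ∃ lam : κ → ℝ, 0 ≤ lam ∧ ∀ x ∈ X, t < f x + lam ⬝ᵥ g x := by
  rcases X.eq_empty_or_nonempty with rfl | hX_ne
  · exact ⟨0, le_rfl, by simp⟩
  have lagrangian_continuousOn : ∀ lam : κ → ℝ,
      ContinuousOn (fun x => f x + lam ⬝ᵥ g x) X := fun lam =>
    hf_cont.add ((Continuous.dotProduct continuous_const continuous_id).comp_continuousOn hg_cont)
  have lagrangian_concave : ∀ x, ConcaveOn ℝ (Set.Ici 0) fun lam : κ → ℝ => f x + lam ⬝ᵥ g x :=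
    fun x => (concaveOn_const (f x) (convex_Ici 0)).add
      (((dotProductBilin ℝ ℝ).flip (g x)).concaveOn (convex_Ici 0))
  refine exists_forall_lt_of_forall_exists_lt (Y := Set.Ici 0) hX hf.1 hX_ne (convex_Ici 0)
    (fun lam _ => (lagrangian_continuousOn lam).lowerSemicontinuousOn)
    (fun lam hlam => (hf.add (convexOn_dotProduct_of_nonneg hg hlam)).quasiconvexOn)
    (fun x _ => (Continuous.continuousOn (by fun_prop)).upperSemicontinuousOn)
    (fun x _ => (lagrangian_concave x).quasiconcaveOn) fun x hx => ?_
  by_cases hfeas : g x ≤ 0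
  · exact ⟨0, Set.self_mem_Ici, by simpa using ht x hx hfeas⟩
  · exact exists_nonneg_lt_add_dotProduct hfeas (f x) t

variable [Fintype ι]

lemma dotProduct_add_dotProduct_sub_mulVec {R : Type*} [CommRing R] (A : Matrix κ ι R)
    (b lam : κ → R) (c x : ι → R) :
    c ⬝ᵥ x + lam ⬝ᵥ (b - A *ᵥ x) = b ⬝ᵥ lam + (c - Aᵀ *ᵥ lam) ⬝ᵥ x := by
  rw [dotProduct_sub, sub_dotProduct, dotProduct_mulVec, mulVec_transpose, dotProduct_comm b]
  ring

variable {A : Matrix κ ι ℝ} {b : κ → ℝ} {c : ι → ℝ}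

lemma dual_le_of_mem_relaxation {lam : κ → ℝ} {mu : ι → ℝ} (hlam : 0 ≤ lam) (hmu : mu ≤ 0)
    (hdual : Aᵀ *ᵥ lam + mu ≤ c) {x : ι → ℝ} (hx : x ∈ relaxation A b) :
    b ⬝ᵥ lam + ∑ i, mu i ≤ c ⬝ᵥ x := by
  have hmu_le : ∑ i, mu i ≤ mu ⬝ᵥ x :=
    sum_le_sum fun i _ => le_mul_of_le_one_right (hmu i) (hx.1.2 i)
  calc b ⬝ᵥ lam + ∑ i, mu i
      ≤ b ⬝ᵥ lam + (c - Aᵀ *ᵥ lam) ⬝ᵥ x := by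
        gcongr
        exact hmu_le.trans <|
          dotProduct_le_dotProduct_of_nonneg_right (le_sub_iff_add_le'.2 hdual) hx.1.1
    _ = c ⬝ᵥ x + lam ⬝ᵥ (b - A *ᵥ x) :=
        (dotProduct_add_dotProduct_sub_mulVec A b lam c x).symm
    _ ≤ c ⬝ᵥ x + lam ⬝ᵥ 0 := by
        gcongr
        exact dotProduct_le_dotProduct_of_nonneg_left (sub_nonpos.2 hx.2) hlam
    _ = c ⬝ᵥ x := by rw [dotProduct_zero, add_zero]

theorem exists_lt_dual_of_forall_mem_relaxation_lt {t : ℝ} (ht : ∀ x ∈ relaxation A b, t < c ⬝ᵥ x) :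
    ∃ (lam : κ → ℝ) (mu : ι → ℝ), 0 ≤ lam ∧ mu ≤ 0 ∧ Aᵀ *ᵥ lam + mu ≤ c ∧
      t < b ⬝ᵥ lam + ∑ i, mu i := by
  obtain ⟨lam, hlam, hlt⟩ := exists_lagrange_multiplier_of_forall_lt (X := Set.Icc (0 : ι → ℝ) 1)
    (f := (c ⬝ᵥ ·)) (g := fun x => b - A *ᵥ x) isCompact_Icc
    ((dotProductBilin ℝ ℝ c).convexOn (convex_Icc 0 1)) (by fun_prop)
    ((convexOn_const b (convex_Icc 0 1)).sub (A.mulVecLin.concaveOn (convex_Icc 0 1)))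
    (by fun_prop) fun x hx hfeas => ht x ⟨hx, sub_nonpos.1 hfeas⟩
  obtain ⟨x, hx, hmin⟩ := exists_mem_Icc_dotProduct_eq_sum_min (c - Aᵀ *ᵥ lam)
  refine ⟨lam, fun i => min 0 ((c - Aᵀ *ᵥ lam) i), hlam, fun i => min_le_left _ _,
    fun i => ?_, ?_⟩
  · exact le_sub_iff_add_le'.1 (min_le_right 0 ((c - Aᵀ *ᵥ lam) i))
  · rw [← hmin, ← dotProduct_add_dotProduct_sub_mulVec]
    exact hlt x hx

end Duality

section Regret

variable {κ ι : Type*} {Ω : Set (ι → ℝ)} {l u c x y : ι → ℝ}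

/-- The scenario in which the items chosen by a binary `y` cost `u i` and the others `l i`. -/
def worstScenario (l u y : ι → ℝ) : ι → ℝ := fun i => l i + (u i - l i) * y i

lemma worstScenario_mem_Icc (hlu : l ≤ u) (hy : y ∈ Set.Icc 0 1) :
    worstScenario l u y ∈ Set.Icc l u := by
  have hgap : ∀ i, 0 ≤ u i - l i := fun i => sub_nonneg.2 (hlu i)
  exact ⟨fun i => le_add_of_nonneg_right (mul_nonneg (hgap i) (hy.1 i)),
    fun i => le_sub_iff_add_le'.1 (mul_le_of_le_one_right (hgap i) (hy.2 i))⟩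

variable [Fintype ι]

/-- The minimum cost over the feasible set `Ω` in the scenario `c`; a junk `0` if `Ω` is empty or
the cost is unbounded below on `Ω`. -/
noncomputable def optValue (Ω : Set (ι → ℝ)) (c : ι → ℝ) : ℝ :=
  sInf {v | ∃ x ∈ Ω, v = ∑ i, c i * x i}

lemma optValue_le (hΩ : Bornology.IsBounded Ω) (hx : x ∈ Ω) : optValue Ω c ≤ c ⬝ᵥ x := by
  have image_bddBelow : BddBelow ((c ⬝ᵥ ·) '' closure Ω) :=
    hΩ.isCompact_closure.bddBelow_image (by fun_prop)
  refine csInf_le (image_bddBelow.mono ?_) ⟨x, hx, rfl⟩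
  rintro - ⟨z, hz, rfl⟩
  exact ⟨z, subset_closure hz, rfl⟩

lemma le_optValue (hne : Ω.Nonempty) {t : ℝ} (ht : ∀ x ∈ Ω, t ≤ c ⬝ᵥ x) : t ≤ optValue Ω c := by
  refine le_csInf (hne.elim fun x hx => ⟨_, x, hx, rfl⟩) ?_
  rintro - ⟨x, hx, rfl⟩
  exact ht x hx

/-- The regret of the solution `y` in the scenario `c`, relative to the feasible set `Ω`. -/
noncomputable def regret (Ω : Set (ι → ℝ)) (c y : ι → ℝ) : ℝ :=
  (∑ i, c i * y i) - optValue Ω c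

lemma regret_nonneg (hΩ : Bornology.IsBounded Ω) (hy : y ∈ Ω) : 0 ≤ regret Ω c y :=
  sub_nonneg.2 (optValue_le hΩ hy)

/-- The robustness cost of `y`: its largest regret over the scenarios between `l` and `u`. -/
noncomputable def robustnessCost (l u : ι → ℝ) (Ω : Set (ι → ℝ)) (y : ι → ℝ) : ℝ :=
  sSup {t | ∃ c : ι → ℝ, (∀ i, l i ≤ c i ∧ c i ≤ u i) ∧ t = regret Ω c y}

lemma dotProduct_sub_le_worstScenario_dotProduct_sub (hc : ∀ i, l i ≤ c i ∧ c i ≤ u i)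
    (hy : ∀ i, y i = 0 ∨ y i = 1) (hx : x ∈ Set.Icc 0 1) :
    c ⬝ᵥ (y - x) ≤ worstScenario l u y ⬝ᵥ (y - x) := by
  refine sum_le_sum fun i _ => ?_
  have hx_nonneg : 0 ≤ x i := hx.1 i
  have hx_le_one : x i ≤ 1 := hx.2 i
  rw [Pi.sub_apply, worstScenario]
  rcases hy i with h | h <;> rw [h] <;> nlinarith [hc i]

lemma regret_le_regret_worstScenario (hΩ : Ω ⊆ Set.Icc 0 1) (hne : Ω.Nonempty)
    (hc : ∀ i, l i ≤ c i ∧ c i ≤ u i) (hy : ∀ i, y i = 0 ∨ y i = 1) :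
    regret Ω c y ≤ regret Ω (worstScenario l u y) y := by
  set w := worstScenario l u y
  suffices optValue Ω w - (w ⬝ᵥ y - c ⬝ᵥ y) ≤ optValue Ω c by
    change c ⬝ᵥ y - optValue Ω c ≤ w ⬝ᵥ y - optValue Ω w
    linarith
  refine le_optValue hne fun x hx => ?_
  have hopt : optValue Ω w ≤ w ⬝ᵥ x := optValue_le ((Metric.isBounded_Icc 0 1).subset hΩ) hx
  have hdiff := dotProduct_sub_le_worstScenario_dotProduct_sub hc hy (hΩ hx)
  rw [dotProduct_sub, dotProduct_sub] at hdiff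
  linarith

theorem robustnessCost_eq_regret_worstScenario (hΩ : Ω ⊆ Set.Icc 0 1) (hne : Ω.Nonempty)
    (hlu : ∀ i, l i ≤ u i) (hy : ∀ i, y i = 0 ∨ y i = 1) :
    robustnessCost l u Ω y = regret Ω (worstScenario l u y) y := by
  have hworst : worstScenario l u y ∈ Set.Icc l u :=
    worstScenario_mem_Icc hlu (mem_Icc_of_forall_eq_zero_or_one hy)
  refine IsGreatest.csSup_eq ⟨⟨_, fun i => ⟨hworst.1 i, hworst.2 i⟩, rfl⟩, ?_⟩
  rintro - ⟨c, hc, rfl⟩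
  exact regret_le_regret_worstScenario hΩ hne hc hy

variable [Fintype κ]

/-- The differences between the cost of `y` in the scenario `c` and the objective values of the
feasible solutions `(lam, mu)` of the dual of `min {c ⬝ᵥ x | x ∈ relaxation A b}`; here `lam` is
dual to `A x ≥ b` and `mu` to `x ≤ 1`. -/
def dualGaps (A : Matrix κ ι ℝ) (b : κ → ℝ) (c y : ι → ℝ) : Set ℝ :=
  {v | ∃ lam : κ → ℝ, ∃ mu : ι → ℝ, (∀ k, 0 ≤ lam k) ∧ (∀ i, mu i ≤ 0) ∧
    (∀ i, A.transpose.mulVec lam i + mu i ≤ c i) ∧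
    v = (∑ i, c i * y i) - (∑ k, b k * lam k) - (∑ i, mu i)}

theorem isGLB_dualGaps {A : Matrix κ ι ℝ} {b : κ → ℝ} (hA : A.IsTotallyUnimodular)
    (hb : ∀ k, ∃ z : ℤ, b k = z) (hne : (binaryPoints A b).Nonempty) (c y : ι → ℝ) :
    IsGLB (dualGaps A b c y) (regret (binaryPoints A b) c y) := by
  constructor
  · rintro - ⟨lam, mu, hlam, hmu, hdual, rfl⟩
    rw [sub_sub]
    exact sub_le_sub_left (le_optValue hne fun x hx =>
      dual_le_of_mem_relaxation hlam hmu hdual (binaryPoints_subset_relaxation hx)) _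
  · intro a ha
    by_contra! hlt
    have lt_cost : ∀ x ∈ relaxation A b, c ⬝ᵥ y - a < c ⬝ᵥ x := fun x hx => by
      obtain ⟨z, hz, hzx⟩ := exists_mem_binaryPoints_dotProduct_le hA hb c hx
      have hopt : optValue (binaryPoints A b) c ≤ c ⬝ᵥ z := optValue_le isBounded_binaryPoints hz
      exact (sub_lt_comm.1 hlt).trans_le (hopt.trans hzx)
    obtain ⟨lam, mu, hlam, hmu, hdual, hval⟩ := exists_lt_dual_of_forall_mem_relaxation_lt lt_cost
    have gap_lt : c ⬝ᵥ y - b ⬝ᵥ lam - ∑ i, mu i < a := by linarith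
    exact (ha ⟨lam, mu, hlam, hmu, hdual, rfl⟩).not_gt gap_lt

end Regret

lemma sInf_exists_mem_eq_sInf_of_isGLB {α β : Type*} [ConditionallyCompleteLattice β]
    [NoTopOrder β] {s : Set α} {D : α → Set β} {f : α → β} (hs : s.Nonempty)
    (hf : BddBelow {r | ∃ y ∈ s, r = f y}) (hD : ∀ y ∈ s, IsGLB (D y) (f y)) :
    sInf {v | ∃ y ∈ s, v ∈ D y} = sInf {r | ∃ y ∈ s, r = f y} := by
  have hglb : IsGLB {r | ∃ y ∈ s, r = f y} (sInf {r | ∃ y ∈ s, r = f y}) :=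
    isGLB_csInf (hs.elim fun y hy => ⟨f y, y, hy, rfl⟩) hf
  obtain ⟨y, hy⟩ := hs
  refine IsGLB.csInf_eq ⟨?_, fun a ha => ?_⟩
    ((hD y hy).nonempty.imp fun v hv => ⟨y, hy, hv⟩)
  · rintro v ⟨y, hy, hv⟩
    exact (hglb.1 ⟨y, hy, rfl⟩).trans ((hD y hy).1 hv)
  · refine hglb.2 ?_
    rintro - ⟨y, hy, rfl⟩
    exact (hD y hy).2 fun v hv => ha ⟨y, hy, hv⟩

theorem lp_dual_heuristic_tight_of_totallyUnimodular_general {κ ι : Type*} [Fintype κ] [Fintype ι]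
    {A : Matrix κ ι ℝ} {b : κ → ℝ} (hA : A.IsTotallyUnimodular) (hb : ∀ k, ∃ z : ℤ, b k = z)
    {l u : ι → ℝ} (hlu : ∀ i, l i ≤ u i) (hne : (binaryPoints A b).Nonempty) :
    sInf {v | ∃ y ∈ binaryPoints A b, v ∈ dualGaps A b (worstScenario l u y) y} =
      sInf {r | ∃ y ∈ binaryPoints A b, r = robustnessCost l u (binaryPoints A b) y} := by
  have cost_eq : ∀ y ∈ binaryPoints A b, robustnessCost l u (binaryPoints A b) y =
      regret (binaryPoints A b) (worstScenario l u y) y := fun y hy =>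
    robustnessCost_eq_regret_worstScenario binaryPoints_subset_Icc hne hlu hy.2
  refine sInf_exists_mem_eq_sInf_of_isGLB hne ⟨0, ?_⟩ fun y hy => ?_
  · rintro - ⟨y, hy, rfl⟩
    exact cost_eq y hy ▸ regret_nonneg isBounded_binaryPoints hy
  · exact cost_eq y hy ▸ isGLB_dualGaps hA hb hne _ y

/-- Tightness of the LP-dual-based heuristic under total unimodularity (second part
of Proposition 1): if `A` is totally unimodular and `b` is integral, then the infimum over all
triples `(y, λ, μ)` with `y ∈ Ω`, `λ ≥ 0`, `μ ≤ 0` and `(Aᵀ λ) i + μ i ≤ l i + (u i - l i) * y i`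
for all `i`, of `∑ i, (l i + (u i - l i) * y i) * y i - ∑ k, b k * λ k - ∑ i, μ i`, equals the
optimal robustness cost `min_{y ∈ Ω} R_y`. -/
theorem lp_dual_heuristic_tight_of_totallyUnimodular
    (m n : ℕ) (hm : 0 < m) (hn : 0 < n)
    (A : Matrix (Fin m) (Fin n) ℝ) (b : Fin m → ℝ)
    (hA : A.IsTotallyUnimodular) (hb : ∀ k, ∃ z : ℤ, b k = z)
    (l u : Fin n → ℝ) (hl : ∀ i, 0 ≤ l i) (hlu : ∀ i, l i ≤ u i)
    (Ω : Set (Fin n → ℝ))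
    (hΩdef : Ω = {y : Fin n → ℝ | (∀ k, b k ≤ A.mulVec y k) ∧ ∀ i, y i = 0 ∨ y i = 1})
    (hΩne : Ω.Nonempty) :
    sInf {v : ℝ | ∃ y ∈ Ω, ∃ lam : Fin m → ℝ, ∃ mu : Fin n → ℝ,
        (∀ k, 0 ≤ lam k) ∧ (∀ i, mu i ≤ 0) ∧
        (∀ i, A.transpose.mulVec lam i + mu i ≤ l i + (u i - l i) * y i) ∧
        v = (∑ i, (l i + (u i - l i) * y i) * y i) - (∑ k, b k * lam k) - (∑ i, mu i)} =
      sInf {r : ℝ | ∃ y ∈ Ω,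
        r = sSup {t : ℝ | ∃ c : Fin n → ℝ, (∀ i, l i ≤ c i ∧ c i ≤ u i) ∧
          t = (∑ i, c i * y i) - sInf {v : ℝ | ∃ x ∈ Ω, v = ∑ i, c i * x i}}} := by
  subst hΩdef
  exact lp_dual_heuristic_tight_of_totallyUnimodular_general hA hb hlu hΩne
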